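/- For a linearly ordered abelian group $(\Gamma,+,\le)$, $a\in\Gamma^n$ and $i\in\{1,\dots,n\}$, let $S(a,i):=\{x\in\Gamma^n : x_i-a_i\ge x_j-a_j \text{ for all } j\in\{1,\dots,n\}\}$. The tropical polytope generated by $v^1,\dots,v^p\in\Gamma^n$ is the set of all $x\in\Gamma^n$ for which there is $\lambda\in\Gamma^p$ with $x_k=\max_{1\le r\le p}(\lambda_r+v^r_k)$ for all $k\in\{1,\dots,n\}$. For $c\in\Gamma$ write $c\cdot\mathbf 1:=(c,\dots,c)\in\Gamma^n$. A point $v$ is an extreme point of type $i$ of a tropical polytope $Q\subseteq\Gamma^n$ if $v\in Q$ and every $x\in Q\cap S(v,i)$ equals $v+c\cdot\mathbf 1$ for some $c\in\Gamma$; it is an extreme point of $Q$ if it is an extreme point of type $i$ for some $i$. Let $P$ be the tropical polytope generated by $v^1,\dots,v^p\in\mathbb R^n$, where $v^1,\dots,v^p$ are pairwise distinct modulo $\mathbb R\mathbf 1$ (that is, $v^r-v^s\notin\mathbb R\mathbf 1$ whenever $r\ne s$), and assume that every $v^r$ that is an extreme point of $P$ has exactly one extremality type. Let $G:=\mathbb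 R^3$ with componentwise addition and the lexicographic order. Fix $\gamma^1,\dots,\gamma^p\in\mathbb R^n$ and define $\tilde v^1,\dots,\tilde v^p\in G^n$ by $\tilde v^r_k:=(v^r_k,1,\gamma^r_k)$ if $v^r$ is an extreme point of $P$ of type $k$, and $\tilde v^r_k:=(v^r_k,0,\gamma^r_k)$ otherwise. Let $\tilde P\subseteq G^n$ be the tropical polytope generated by $\tilde v^1,\dots,\tilde v^p$. Then for every $r\in\{1,\dots,p\}$ and every $i\in\{1,\dots,n\}$: $v^r$ is an extreme point of $P$ of type $i$ if and only if $\tilde v^r$ is an extreme point of $\tilde P$ of type $i$. -/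

import Mathlib

/-!
For a fixed type `i`, the relation `x ∈ sector y i` is a preorder whose symmetrization is equality
modulo multiples of the all-ones vector, so the extreme points of type `i` are the minimal points
of the polytope. Every point of a tropical polytope lies above a generator, hence minimality only
has to be tested on generators, and by finiteness every point lies above an extreme generator.

Passing to the leading coordinate of a lexicographic pair is monotone for these preorders, so the
perturbation cannot add comparisons between generators and extremality survives. Conversely, let
`v r` be not extreme of type `i`, and let `v s` be an extreme generator below it. As `v s` has no
type besides `i`, the perturbation favours its coordinate `i` strictly, so `v s` is still below
`v r` after the perturbation. If the perturbed `v r` were extreme, `v r` would in turn lie below the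
minimal point `v s` and hence be minimal itself.
-/

section Tropical

variable {α : Type*} [LinearOrder α] [AddCommGroup α]

/-- `x` and `y` are the same point modulo addition of multiples of the all-ones vector. -/
def ProjEq {n : ℕ} (x y : Fin n → α) : Prop :=
  ∃ c : α, ∀ k, x k = y k + c

/-- The sector `S(a,i) = {x | x_i - a_i ≥ x_j - a_j for all j}`. -/
def sector {n : ℕ} (a : Fin n → α) (i : Fin n) : Set (Fin n → α) :=
  {x | ∀ j, x j - a j ≤ x i - a i}

/-- The tropical polytope generated by the points `v r`: the set of all `x` such that, for some
scalars `l r`, each coordinate `x k` is the maximum over `r` of `l r + v r k`. -/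
def tropPoly {n p : ℕ} (v : Fin p → Fin n → α) : Set (Fin n → α) :=
  {x | ∃ l : Fin p → α, ∀ k, IsGreatest (Set.range fun r => l r + v r k) (x k)}

/-- `v` is an extreme point of `P` of type `i`: it belongs to `P` and is, modulo addition of
multiples of the all-ones vector, the only point of `P` in the sector `S(v,i)`. -/
def ExtremeOfType {n : ℕ} (P : Set (Fin n → α)) (v : Fin n → α) (i : Fin n) : Prop :=
  v ∈ P ∧ ∀ x ∈ P ∩ sector v i, ProjEq x v

end Tropical

/-- The group `ℝ³` with componentwise addition and the lexicographic order. -/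
abbrev LexR3 : Type := ℝ ×ₗ ℝ ×ₗ ℝ

/-- The element `(a, b, c)` of `LexR3`. -/
def mkLexR3 (a b c : ℝ) : LexR3 := toLex (a, toLex (b, c))

open Classical in
/-- The symbolic perturbation of the generators `v r`: the `k`-th coordinate of the `r`-th
perturbed point is `(v r k, 1, γ r k)` if `v r` is an extreme point of type `k` of the tropical
polytope generated by `v`, and `(v r k, 0, γ r k)` otherwise. -/
noncomputable def perturbed {n p : ℕ} (v γ : Fin p → Fin n → ℝ) : Fin p → Fin n → LexR3 :=
  fun r k => mkLexR3 (v r k) (if ExtremeOfType (tropPoly v) (v r) k then 1 else 0) (γ r k)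

section Sector

variable {α : Type*} [LinearOrder α] [AddCommGroup α] {n : ℕ} {i : Fin n}

theorem mem_sector_self (x : Fin n → α) (i : Fin n) : x ∈ sector x i := fun j => by
  rw [sub_self, sub_self]

variable [IsOrderedAddMonoid α] {x y z : Fin n → α}

theorem mem_sector_trans (hxy : x ∈ sector y i) (hyz : y ∈ sector z i) : x ∈ sector z i :=
  fun j => by simpa only [sub_add_sub_cancel] using add_le_add (hxy j) (hyz j)

theorem projEq_iff_mem_sector : ProjEq x y ↔ x ∈ sector y i ∧ y ∈ sector x i := by
  constructor
  · rintro ⟨c, hc⟩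
    exact ⟨fun j => by simp [hc], fun j => by simp [hc]⟩
  · rintro ⟨hxy, hyx⟩
    have hsub (k : Fin n) : x k - y k = x i - y i :=
      (hxy k).antisymm (by simpa only [neg_sub] using neg_le_neg (hyx k))
    exact ⟨x i - y i, fun k => by rw [← hsub k, add_sub_cancel]⟩

theorem ExtremeOfType.of_mem_sector {P : Set (Fin n → α)} (hy : ExtremeOfType P y i) (hx : x ∈ P)
    (hxy : x ∈ sector y i) : ExtremeOfType P x i := by
  refine ⟨hx, fun z ⟨hz, hzx⟩ => projEq_iff_mem_sector.mpr ⟨hzx, ?_⟩⟩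
  have hzy : ProjEq z y := hy.2 z ⟨hz, mem_sector_trans hzx hxy⟩
  exact mem_sector_trans hxy (projEq_iff_mem_sector.mp hzy).2

/-- The preorder on the index set of a family `v` of points for which `s ≤ r` means that `v s` lies
in the sector `S(v r, i)`. It provides minimal elements in finite families; it is not an instance,
as it depends on `v` and `i`. -/
abbrev sectorPreorder {ι : Type*} (v : ι → Fin n → α) (i : Fin n) : Preorder ι where
  le s r := v s ∈ sector (v r) i
  le_refl r := mem_sector_self (v r) i
  le_trans _ _ _ := mem_sector_trans

end Sector

section TropicalPolytope

variable {α : Type*} [LinearOrder α] [AddCommGroup α] [IsOrderedAddMonoid α] {n p : ℕ}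

theorem generator_mem_tropPoly (v : Fin p → Fin n → α) (r : Fin p) : v r ∈ tropPoly v := by
  cases isEmpty_or_nonempty (Fin n)
  · exact ⟨0, isEmptyElim⟩
  choose m hm using fun s => Finite.exists_min fun k => v r k - v s k
  refine ⟨fun s => v r (m s) - v s (m s), fun k => ⟨⟨r, by simp⟩, ?_⟩⟩
  rintro _ ⟨s, rfl⟩
  exact le_sub_iff_add_le.mp (hm s k)

variable {v : Fin p → Fin n → α}

theorem exists_generator_mem_sector {x : Fin n → α} (hx : x ∈ tropPoly v) (i : Fin n) :
    ∃ s, v s ∈ sector x i := by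
  obtain ⟨l, hl⟩ := hx
  obtain ⟨s, hs : l s + v s i = x i⟩ := (hl i).1
  refine ⟨s, fun j => ?_⟩
  have hle : l s + v s j ≤ x j := (hl j).2 ⟨s, rfl⟩
  calc v s j - x j ≤ -l s := by
        rwa [sub_le_iff_le_add, le_neg_add_iff_add_le]
    _ = v s i - x i := by rw [← hs]; abel

theorem extremeOfType_generator_iff {r : Fin p} {i : Fin n} :
    ExtremeOfType (tropPoly v) (v r) i ↔ ∀ s, v s ∈ sector (v r) i → v r ∈ sector (v s) i := by
  constructor
  · intro hr s hs
    exact (projEq_iff_mem_sector.mp (hr.2 (v s) ⟨generator_mem_tropPoly v s, hs⟩)).2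
  · intro hmin
    refine ⟨generator_mem_tropPoly v r, fun x ⟨hx, hxr⟩ => ?_⟩
    obtain ⟨s, hsx⟩ := exists_generator_mem_sector hx i
    have hrs : v r ∈ sector (v s) i := hmin s (mem_sector_trans hsx hxr)
    exact projEq_iff_mem_sector.mpr ⟨hxr, mem_sector_trans hrs hsx⟩

theorem exists_extremeOfType_generator_mem_sector {x : Fin n → α} (hx : x ∈ tropPoly v)
    (i : Fin n) : ∃ s, v s ∈ sector x i ∧ ExtremeOfType (tropPoly v) (v s) i := by
  obtain ⟨t, htx⟩ := exists_generator_mem_sector hx i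
  let _ : Preorder (Fin p) := sectorPreorder v i
  obtain ⟨s, hst, hmin⟩ := Set.finite_univ.exists_le_minimal (Set.mem_univ t)
  exact ⟨s, mem_sector_trans hst htx,
    extremeOfType_generator_iff.mpr fun u hus => hmin.2 (Set.mem_univ u) hus⟩

end TropicalPolytope

section LexPair

variable {α β : Type*} {n p : ℕ}

/-- The point with coordinates `(x k, y k)` in the lexicographic product: the perturbation of `x`
by `y`, infinitesimal relative to `x`. -/
def lexPair (x : Fin n → α) (y : Fin n → β) : Fin n → α ×ₗ β := fun k => toLex (x k, y k)

variable [LinearOrder α] [AddCommGroup α] [LinearOrder β] [AddCommGroup β]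
  {x a : Fin n → α} {y b : Fin n → β} {i : Fin n}

theorem mem_sector_of_lexPair (h : lexPair x y ∈ sector (lexPair a b) i) : x ∈ sector a i :=
  fun j => Prod.Lex.monotone_fst _ _ (h j)

theorem lexPair_mem_sector (hx : x ∈ sector a i) (hy : y ∈ sector b i) :
    lexPair x y ∈ sector (lexPair a b) i :=
  fun j => Prod.Lex.toLex_mono (Prod.mk_le_mk.mpr ⟨hx j, hy j⟩)

theorem lexPair_mem_sector_of_lt (hx : ∀ j ≠ i, x j - a j < x i - a i) :
    lexPair x y ∈ sector (lexPair a b) i := by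
  intro j
  obtain rfl | hj := eq_or_ne j i
  · exact le_rfl
  · exact Prod.Lex.toLex_le_toLex.mpr (Or.inl (hx j hj))

variable [IsOrderedAddMonoid α] [IsOrderedAddMonoid β]
  {v : Fin p → Fin n → α} {w : Fin p → Fin n → β} {r : Fin p}

protected theorem ExtremeOfType.lexPair (hr : ExtremeOfType (tropPoly v) (v r) i)
    (hdistinct : ∀ s, ProjEq (v s) (v r) → s = r) :
    ExtremeOfType (tropPoly fun s => lexPair (v s) (w s)) (lexPair (v r) (w r)) i := by
  refine extremeOfType_generator_iff.mpr fun s hs => ?_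
  have hsr : ProjEq (v s) (v r) :=
    hr.2 (v s) ⟨generator_mem_tropPoly v s, mem_sector_of_lexPair hs⟩
  rw [hdistinct s hsr]
  exact mem_sector_self _ i

theorem ExtremeOfType.of_lexPair
    (hr : ExtremeOfType (tropPoly fun s => lexPair (v s) (w s)) (lexPair (v r) (w r)) i)
    (hw : ¬ ExtremeOfType (tropPoly v) (v r) i →
      ∀ s, ExtremeOfType (tropPoly v) (v s) i → w s ∈ sector (w r) i) :
    ExtremeOfType (tropPoly v) (v r) i := by
  by_contra hnot
  obtain ⟨s, hsr, hs⟩ := exists_extremeOfType_generator_mem_sector (generator_mem_tropPoly v r) i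
  have hrs : v r ∈ sector (v s) i := mem_sector_of_lexPair
    (extremeOfType_generator_iff.mp hr s (lexPair_mem_sector hsr (hw hnot s hs)))
  exact hnot (hs.of_mem_sector (generator_mem_tropPoly v r) hrs)

end LexPair

section TypeBonus

variable {α β δ : Type*} [LinearOrder α] [AddCommGroup α] [LinearOrder β] [AddCommGroup β]
  {n p : ℕ} {ε : β}

open Classical in
/-- The correction vector of the generator `v r`: `ε` in the coordinates `k` such that `v r` is
extreme of type `k`, and `0` elsewhere. -/
noncomputable def typeBonus (ε : β) (v : Fin p → Fin n → α) (r : Fin p) : Fin n → β :=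
  fun k => if ExtremeOfType (tropPoly v) (v r) k then ε else 0

theorem typeBonus_nonneg (hε : 0 ≤ ε) (v : Fin p → Fin n → α) (r : Fin p) (k : Fin n) :
    0 ≤ typeBonus ε v r k := by
  unfold typeBonus
  split_ifs
  exacts [hε, le_rfl]

variable [IsOrderedAddMonoid β] {v : Fin p → Fin n → α} {r s : Fin p} {i j : Fin n}

theorem typeBonus_sub_lt (hε : 0 < ε) (hr : ¬ ExtremeOfType (tropPoly v) (v r) i)
    (hsi : ExtremeOfType (tropPoly v) (v s) i) (hsj : ¬ ExtremeOfType (tropPoly v) (v s) j) :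
    typeBonus ε v s j - typeBonus ε v r j < typeBonus ε v s i - typeBonus ε v r i :=
  calc typeBonus ε v s j - typeBonus ε v r j = -typeBonus ε v r j := by
        rw [typeBonus, if_neg hsj, zero_sub]
    _ ≤ 0 := neg_nonpos.mpr (typeBonus_nonneg hε.le v r j)
    _ < ε := hε
    _ = typeBonus ε v s i - typeBonus ε v r i := by
        rw [typeBonus, typeBonus, if_pos hsi, if_neg hr, sub_zero]

variable [IsOrderedAddMonoid α] [LinearOrder δ] [AddCommGroup δ] [IsOrderedAddMonoid δ]

theorem perturbed_extremality_type_general (hε : 0 < ε)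
    (hdistinct : ∀ s, ProjEq (v s) (v r) → s = r)
    (huniq : ∀ s, ExtremeOfType (tropPoly v) (v s) i →
      ∀ j, ExtremeOfType (tropPoly v) (v s) j → j = i)
    (γ : Fin p → Fin n → δ) :
    ExtremeOfType (tropPoly v) (v r) i ↔
      ExtremeOfType (tropPoly fun s => lexPair (v s) (lexPair (typeBonus ε v s) (γ s)))
        (lexPair (v r) (lexPair (typeBonus ε v r) (γ r))) i :=
  ⟨fun hr => hr.lexPair hdistinct, fun hr => hr.of_lexPair fun hnot s hs =>
    lexPair_mem_sector_of_lt fun j hj => typeBonus_sub_lt hε hnot hs (mt (huniq s hs j) hj)⟩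

end TypeBonus

theorem perturbed_extremality_type {n p : ℕ} (v : Fin p → Fin n → ℝ)
    (hdistinct : ∀ r s : Fin p, r ≠ s → ¬ ProjEq (v r) (v s))
    (huniq : ∀ r : Fin p, (∃ i, ExtremeOfType (tropPoly v) (v r) i) →
      ∃! i, ExtremeOfType (tropPoly v) (v r) i)
    (γ : Fin p → Fin n → ℝ) :
    ∀ (r : Fin p) (i : Fin n),
      ExtremeOfType (tropPoly v) (v r) i ↔
        ExtremeOfType (tropPoly (perturbed v γ)) (perturbed v γ r) i :=
  fun r i => perturbed_extremality_type_general one_pos (fun s => not_imp_not.mp (hdistinct s r))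
    (fun s hs _ hj => (huniq s ⟨i, hs⟩).unique hj hs) γ
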